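/- arXiv:2507.02077 — 2 statements merged into one kernel-verified Lean document; each statement's English description precedes it below -/
import Mathlib

section
/- For every pair j ≠ k, the function T^{j,k} satisfies a ΔT^{j,k} + ∇a · ∇T^{j,k} = 0 at every point of U; that is, a Σ_{i=1}^n ∂_{ii}T^{j,k} + Σ_{i=1}^n (∂_i a)(∂_i T^{j,k}) = 0. -/
/-- Partial derivative in direction `i` of a function on `ℝⁿ`. -/
noncomputable def pd {n : ℕ} (i : Fin n) (f : EuclideanSpace ℝ (Fin n) → ℝ)
    (x : EuclideanSpace ℝ (Fin n)) : ℝ :=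
  fderiv ℝ f x (EuclideanSpace.single i 1)


section helpers

variable {n : ℕ} {U : Set (EuclideanSpace ℝ (Fin n))}

theorem pd_congr (hU : IsOpen U) {f g : EuclideanSpace ℝ (Fin n) → ℝ}
    (h : ∀ x ∈ U, f x = g x) (i : Fin n) {x : EuclideanSpace ℝ (Fin n)} (hx : x ∈ U) :
    pd i f x = pd i g x := by
  unfold pd
  have : f =ᶠ[nhds x] g := Filter.eventually_of_mem (hU.mem_nhds hx) h
  rw [this.fderiv_eq]

theorem pd_smooth (hU : IsOpen U) {f : EuclideanSpace ℝ (Fin n) → ℝ}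
    (hf : ContDiffOn ℝ (⊤ : ℕ∞) f U) (i : Fin n) : ContDiffOn ℝ (⊤ : ℕ∞) (pd i f) U := by
  unfold pd
  exact (hf.fderiv_of_isOpen hU (by simp)).clm_apply contDiffOn_const

theorem smooth_diff (hU : IsOpen U) {f : EuclideanSpace ℝ (Fin n) → ℝ}
    (hf : ContDiffOn ℝ (⊤ : ℕ∞) f U) {x : EuclideanSpace ℝ (Fin n)} (hx : x ∈ U) :
    DifferentiableAt ℝ f x :=
  (hf.contDiffAt (hU.mem_nhds hx)).differentiableAt (by simp)

theorem pd_add' {f g : EuclideanSpace ℝ (Fin n) → ℝ} {x : EuclideanSpace ℝ (Fin n)}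
    (hf : DifferentiableAt ℝ f x) (hg : DifferentiableAt ℝ g x) (i : Fin n) :
    pd i (fun y => f y + g y) x = pd i f x + pd i g x := by
  unfold pd
  rw [fderiv_fun_add hf hg]; rfl

theorem pd_sub' {f g : EuclideanSpace ℝ (Fin n) → ℝ} {x : EuclideanSpace ℝ (Fin n)}
    (hf : DifferentiableAt ℝ f x) (hg : DifferentiableAt ℝ g x) (i : Fin n) :
    pd i (fun y => f y - g y) x = pd i f x - pd i g x := by
  unfold pd
  rw [fderiv_fun_sub hf hg]; rfl

theorem pd_mul' {f g : EuclideanSpace ℝ (Fin n) → ℝ} {x : EuclideanSpace ℝ (Fin n)}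
    (hf : DifferentiableAt ℝ f x) (hg : DifferentiableAt ℝ g x) (i : Fin n) :
    pd i (fun y => f y * g y) x = pd i f x * g x + f x * pd i g x := by
  unfold pd
  rw [fderiv_fun_mul hf hg]
  simp; ring

theorem pd_const' (c : ℝ) {x : EuclideanSpace ℝ (Fin n)} (i : Fin n) :
    pd i (fun _ => c) x = 0 := by
  unfold pd
  simp

theorem pd_sum' {f : Fin n → EuclideanSpace ℝ (Fin n) → ℝ} {x : EuclideanSpace ℝ (Fin n)}
    (hf : ∀ l, DifferentiableAt ℝ (f l) x) (i : Fin n) :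
    pd i (fun y => ∑ l, f l y) x = ∑ l, pd i (f l) x := by
  unfold pd
  rw [fderiv_fun_sum (fun l _ => hf l)]
  simp

theorem coord_diff (j : Fin n) (x : EuclideanSpace ℝ (Fin n)) :
    DifferentiableAt ℝ (fun y : EuclideanSpace ℝ (Fin n) => y j) x :=
  (EuclideanSpace.proj (𝕜 := ℝ) j : EuclideanSpace ℝ (Fin n) →L[ℝ] ℝ).differentiableAt

theorem pd_coord (i j : Fin n) (x : EuclideanSpace ℝ (Fin n)) :
    pd i (fun y : EuclideanSpace ℝ (Fin n) => y j) x = if i = j then 1 else 0 := by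
  unfold pd
  have h := (EuclideanSpace.proj (𝕜 := ℝ) j : EuclideanSpace ℝ (Fin n) →L[ℝ] ℝ).fderiv (x := x)
  have h2 : fderiv ℝ (fun y : EuclideanSpace ℝ (Fin n) => y j) x
      = (EuclideanSpace.proj (𝕜 := ℝ) j : EuclideanSpace ℝ (Fin n) →L[ℝ] ℝ) := h
  rw [h2]
  simp [eq_comm]

theorem pd_comm' (hU : IsOpen U) {f : EuclideanSpace ℝ (Fin n) → ℝ}
    (hf : ContDiffOn ℝ (⊤ : ℕ∞) f U) (i j : Fin n) {x : EuclideanSpace ℝ (Fin n)} (hx : x ∈ U) :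
    pd i (pd j f) x = pd j (pd i f) x := by
  have hc := hf.contDiffAt (hU.mem_nhds hx)
  have hs : IsSymmSndFDerivAt ℝ f x := hc.isSymmSndFDerivAt (by
    simp only [minSmoothness_of_isRCLikeNormedField]
    exact WithTop.coe_le_coe.2 le_top)
  have hd : DifferentiableAt ℝ (fderiv ℝ f) x :=
    ((hf.fderiv_of_isOpen hU (m := (⊤ : ℕ∞)) (by simp)).contDiffAt
      (hU.mem_nhds hx)).differentiableAt (by simp)
  have key : ∀ i j : Fin n, pd i (pd j f) x =
      fderiv ℝ (fderiv ℝ f) x (EuclideanSpace.single i 1) (EuclideanSpace.single j 1) := by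
    intro i j
    unfold pd
    rw [fderiv_clm_apply hd (differentiableAt_const _)]
    simp
  rw [key, key]
  exact hs _ _

/-- The rotation field. -/
noncomputable def rot (j k : Fin n) (f : EuclideanSpace ℝ (Fin n) → ℝ)
    (x : EuclideanSpace ℝ (Fin n)) : ℝ := x j * pd k f x - x k * pd j f x

theorem coord_smooth (j : Fin n) :
    ContDiffOn ℝ (⊤ : ℕ∞) (fun y : EuclideanSpace ℝ (Fin n) => y j) U :=
  (EuclideanSpace.proj (𝕜 := ℝ) j : EuclideanSpace ℝ (Fin n) →L[ℝ] ℝ).contDiff.contDiffOn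

theorem rot_smooth (hU : IsOpen U) {f : EuclideanSpace ℝ (Fin n) → ℝ}
    (hf : ContDiffOn ℝ (⊤ : ℕ∞) f U) (j k : Fin n) : ContDiffOn ℝ (⊤ : ℕ∞) (rot j k f) U := by
  unfold rot
  exact ((coord_smooth j).mul (pd_smooth hU hf k)).sub ((coord_smooth k).mul (pd_smooth hU hf j))

theorem pd_rot (hU : IsOpen U) {f : EuclideanSpace ℝ (Fin n) → ℝ}
    (hf : ContDiffOn ℝ (⊤ : ℕ∞) f U) (i j k : Fin n) {x : EuclideanSpace ℝ (Fin n)}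
    (hx : x ∈ U) :
    pd i (rot j k f) x = rot j k (pd i f) x
      + ((if i = j then 1 else 0) * pd k f x - (if i = k then 1 else 0) * pd j f x) := by
  have hk := smooth_diff hU (pd_smooth hU hf k) hx
  have hj := smooth_diff hU (pd_smooth hU hf j) hx
  unfold rot
  rw [pd_sub' ((coord_diff j x).fun_mul hk) ((coord_diff k x).fun_mul hj), pd_mul' (coord_diff j x) hk,
    pd_mul' (coord_diff k x) hj, pd_coord, pd_coord, pd_comm' hU hf i k hx, pd_comm' hU hf i j hx]
  ring

theorem pd_pd_rot (hU : IsOpen U) {f : EuclideanSpace ℝ (Fin n) → ℝ}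
    (hf : ContDiffOn ℝ (⊤ : ℕ∞) f U) (i j k : Fin n) {x : EuclideanSpace ℝ (Fin n)}
    (hx : x ∈ U) :
    pd i (pd i (rot j k f)) x = rot j k (pd i (pd i f)) x
      + 2 * ((if i = j then 1 else 0) * pd i (pd k f) x
        - (if i = k then 1 else 0) * pd i (pd j f) x) := by
  have hk := smooth_diff hU (pd_smooth hU hf k) hx
  have hj := smooth_diff hU (pd_smooth hU hf j) hx
  have hr := smooth_diff hU (rot_smooth hU (pd_smooth hU hf i) j k) hx
  rw [pd_congr hU (fun y hy => pd_rot hU hf i j k hy) i hx]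
  have c1 : DifferentiableAt ℝ (fun _ : EuclideanSpace ℝ (Fin n) =>
    (if i = j then (1 : ℝ) else 0)) x := differentiableAt_const _
  have c2 : DifferentiableAt ℝ (fun _ : EuclideanSpace ℝ (Fin n) =>
    (if i = k then (1 : ℝ) else 0)) x := differentiableAt_const _
  rw [pd_add' hr ((c1.fun_mul hk).fun_sub (c2.fun_mul hj)), pd_sub' (c1.fun_mul hk) (c2.fun_mul hj),
    pd_mul' c1 hk, pd_mul' c2 hj, pd_const', pd_const', pd_rot hU (pd_smooth hU hf i) i j k hx,
    pd_comm' hU hf i k hx, pd_comm' hU hf i j hx]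
  ring

theorem lap_rot (hU : IsOpen U) {f : EuclideanSpace ℝ (Fin n) → ℝ}
    (hf : ContDiffOn ℝ (⊤ : ℕ∞) f U) (j k : Fin n) {x : EuclideanSpace ℝ (Fin n)}
    (hx : x ∈ U) :
    ∑ i, pd i (pd i (rot j k f)) x = ∑ i, rot j k (pd i (pd i f)) x := by
  rw [Finset.sum_congr rfl (fun i _ => pd_pd_rot hU hf i j k hx), Finset.sum_add_distrib,
    ← Finset.mul_sum, Finset.sum_sub_distrib]
  simp [pd_comm' hU hf j k hx]

end helpers

/-- Section 5: for `j ≠ k`, the quantity `T^{j,k} = −x_k ∂_j u + x_j ∂_k u` satisfies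
`a ΔT^{j,k} + ∇a · ∇T^{j,k} = 0` on `U`, in any dimension `n ≥ 2`. -/
theorem stmt9 (n : ℕ) (hn : 2 ≤ n)
    (U : Set (EuclideanSpace ℝ (Fin n))) (hU : IsOpen U)
    (a u : EuclideanSpace ℝ (Fin n) → ℝ)
    (ha : ContDiffOn ℝ (⊤ : ℕ∞) a U) (hapos : ∀ x ∈ U, 0 < a x)
    (hrad : ∀ (j k : Fin n), ∀ x ∈ U, x j * pd k a x - x k * pd j a x = 0)
    (hu : ContDiffOn ℝ (⊤ : ℕ∞) u U)
    (heq : ∀ x ∈ U, a x * (∑ i, pd i (pd i u) x) + ∑ i, pd i a x * pd i u x = 0)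
    (T : Fin n → Fin n → EuclideanSpace ℝ (Fin n) → ℝ)
    (hT : ∀ j k x, T j k x = -(x k) * pd j u x + x j * pd k u x) :
    ∀ (j k : Fin n), j ≠ k → ∀ x ∈ U,
      a x * (∑ i, pd i (pd i (T j k)) x) + ∑ i, pd i a x * pd i (T j k) x = 0 := by
  intro j k _ x hx
  have hTr : T j k = rot j k u := by
    funext y
    rw [hT, rot]; ring
  have hda := smooth_diff hU ha hx
  have hdp : ∀ {f : EuclideanSpace ℝ (Fin n) → ℝ}, ContDiffOn ℝ (⊤ : ℕ∞) f U →
      ∀ i, DifferentiableAt ℝ (pd i f) x := fun hf i => smooth_diff hU (pd_smooth hU hf i) hx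
  have hdpp : ∀ i, DifferentiableAt ℝ (pd i (pd i u)) x := fun i => hdp (pd_smooth hU hu i) i
  -- derivative of the equation
  have hL : ∀ l, pd l a x * (∑ i, pd i (pd i u) x) + a x * (∑ i, pd l (pd i (pd i u)) x)
      + ∑ i, (pd l (pd i a) x * pd i u x + pd i a x * pd l (pd i u) x) = 0 := by
    intro l
    have h := pd_congr hU (g := fun _ => (0 : ℝ)) heq l hx
    have d1 : DifferentiableAt ℝ (fun y => ∑ i, pd i (pd i u) y) x :=
      DifferentiableAt.fun_sum (fun i _ => hdpp i)
    have d2 : ∀ i, DifferentiableAt ℝ (fun y => pd i a y * pd i u y) x :=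
      fun i => (hdp ha i).mul (hdp hu i)
    rw [pd_const', pd_add' (hda.fun_mul d1) (DifferentiableAt.fun_sum (fun i _ => d2 i)),
      pd_mul' hda d1, pd_sum' hdpp, pd_sum' d2,
      Finset.sum_congr rfl (fun i _ => pd_mul' (hdp ha i) (hdp hu i) l)] at h
    exact h
  -- derivative of radiality
  have hra : ∀ i, rot j k (pd i a) x
      = -((if i = j then 1 else 0) * pd k a x - (if i = k then 1 else 0) * pd j a x) := by
    intro i
    have h := pd_congr hU (f := rot j k a) (g := fun _ => (0 : ℝ)) (fun y hy => hrad j k y hy) i hx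
    rw [pd_const', pd_rot hU ha i j k hx] at h
    linarith
  rw [hTr, lap_rot hU hu j k hx, Finset.sum_congr rfl
    (fun i _ => congrArg (pd i a x * ·) (pd_rot hU hu i j k hx))]
  have e1 : ∑ i, rot j k (pd i (pd i u)) x = x j * ∑ i, pd k (pd i (pd i u)) x
      - x k * ∑ i, pd j (pd i (pd i u)) x := by
    simp only [rot, Finset.sum_sub_distrib, Finset.mul_sum]
  have e2 : ∑ i, (rot j k (pd i a) x * pd i u x + pd i a x * rot j k (pd i u) x)
      = x j * ∑ i, (pd k (pd i a) x * pd i u x + pd i a x * pd k (pd i u) x)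
      - x k * ∑ i, (pd j (pd i a) x * pd i u x + pd i a x * pd j (pd i u) x) := by
    rw [Finset.mul_sum, Finset.mul_sum, ← Finset.sum_sub_distrib]
    refine Finset.sum_congr rfl (fun i _ => ?_)
    simp only [rot]; ring
  have e3 : ∑ i, pd i a x * (rot j k (pd i u) x
      + ((if i = j then 1 else 0) * pd k u x - (if i = k then 1 else 0) * pd j u x))
      = ∑ i, (rot j k (pd i a) x * pd i u x + pd i a x * rot j k (pd i u) x) := by
    have f1 : ∑ i, (if i = j then (1 : ℝ) else 0) * (pd i a x * pd k u x + pd k a x * pd i u x)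
        = pd j a x * pd k u x + pd k a x * pd j u x := by simp
    have f2 : ∑ i, (if i = k then (1 : ℝ) else 0) * (pd i a x * pd j u x + pd j a x * pd i u x)
        = pd k a x * pd j u x + pd j a x * pd k u x := by simp
    rw [← sub_eq_zero, ← Finset.sum_sub_distrib]
    have f3 : ∀ i, pd i a x * (rot j k (pd i u) x
        + ((if i = j then 1 else 0) * pd k u x - (if i = k then 1 else 0) * pd j u x))
        - (rot j k (pd i a) x * pd i u x + pd i a x * rot j k (pd i u) x)
        = (if i = j then (1 : ℝ) else 0) * (pd i a x * pd k u x + pd k a x * pd i u x)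
        - (if i = k then (1 : ℝ) else 0) * (pd i a x * pd j u x + pd j a x * pd i u x) := by
      intro i
      rw [hra i]; ring
    rw [Finset.sum_congr rfl (fun i _ => f3 i), Finset.sum_sub_distrib, f1, f2]
    ring
  have hr0 := hrad j k x hx
  rw [e3, e2, e1]
  linear_combination x j * hL k - x k * hL j - (∑ i, pd i (pd i u) x) * hr0
end

section
/- For every pair j ≠ k, at every point of U one has −(∂_k a)(∂_j R) + (∂_j a)(∂_k R) = a Σ_{i=1}^n (∂_i a)(∂_i T^{j,k}). -/
theorem pd_pd_aux {n : ℕ} (u : EuclideanSpace ℝ (Fin n) → ℝ) (x : EuclideanSpace ℝ (Fin n))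
    (hu : ContDiffAt ℝ (⊤ : ℕ∞) u x) (i : Fin n) :
    HasFDerivAt (pd i u)
      ((fderiv ℝ (fderiv ℝ u) x).flip (EuclideanSpace.single i 1)) x := by
  have h1 : ContDiffAt ℝ 1 (fderiv ℝ u) x :=
    hu.fderiv_right (m := 1) (by
      rw [one_add_one_eq_two]; exact WithTop.coe_le_coe.2 (le_top : (2 : ℕ∞) ≤ ⊤))
  have h2 : HasFDerivAt (fderiv ℝ u) (fderiv ℝ (fderiv ℝ u) x) x :=
    (h1.differentiableAt (by simp)).hasFDerivAt
  have h3 := h2.clm_apply (hasFDerivAt_const (EuclideanSpace.single i (1 : ℝ)) x)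
  refine h3.congr_fderiv ?_
  ext v
  simp

theorem pd_symm_aux {n : ℕ} (u : EuclideanSpace ℝ (Fin n) → ℝ) (x : EuclideanSpace ℝ (Fin n))
    (hu : ContDiffAt ℝ (⊤ : ℕ∞) u x) (i j : Fin n) :
    pd i (pd j u) x = pd j (pd i u) x := by
  have h : IsSymmSndFDerivAt ℝ u x := hu.isSymmSndFDerivAt (by
    rw [minSmoothness_of_isRCLikeNormedField]; exact WithTop.coe_le_coe.2 (le_top : (2 : ℕ∞) ≤ ⊤))
  rw [pd, (pd_pd_aux u x hu j).fderiv, pd, (pd_pd_aux u x hu i).fderiv]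
  exact h.eq _ _

theorem coord_aux {n : ℕ} (x : EuclideanSpace ℝ (Fin n)) (k : Fin n) :
    HasFDerivAt (fun y : EuclideanSpace ℝ (Fin n) => y k)
      (EuclideanSpace.proj k : EuclideanSpace ℝ (Fin n) →L[ℝ] ℝ) x :=
  (EuclideanSpace.proj k : EuclideanSpace ℝ (Fin n) →L[ℝ] ℝ).hasFDerivAt

/-- Section 5: for `j ≠ k`, one has `−a_k R_j + a_j R_k = a ∑_i a_i (T^{j,k})_i` on `U`,
in any dimension `n ≥ 2`. -/
theorem stmt11 (n : ℕ) (hn : 2 ≤ n)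
    (U : Set (EuclideanSpace ℝ (Fin n))) (hU : IsOpen U)
    (a u : EuclideanSpace ℝ (Fin n) → ℝ)
    (ha : ContDiffOn ℝ (⊤ : ℕ∞) a U) (hapos : ∀ x ∈ U, 0 < a x)
    (hrad : ∀ (j k : Fin n), ∀ x ∈ U, x j * pd k a x - x k * pd j a x = 0)
    (hu : ContDiffOn ℝ (⊤ : ℕ∞) u U)
    (heq : ∀ x ∈ U, a x * (∑ i, pd i (pd i u) x) + ∑ i, pd i a x * pd i u x = 0)
    (T : Fin n → Fin n → EuclideanSpace ℝ (Fin n) → ℝ)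
    (hT : ∀ j k x, T j k x = -(x k) * pd j u x + x j * pd k u x)
    (R : EuclideanSpace ℝ (Fin n) → ℝ)
    (hR : ∀ x, R x = a x * ∑ k, x k * pd k u x) :
    ∀ (j k : Fin n), j ≠ k → ∀ x ∈ U,
      -(pd k a x) * pd j R x + pd j a x * pd k R x
        = a x * ∑ i, pd i a x * pd i (T j k) x := by
  intro j k _ x hx
  have hax : ContDiffAt ℝ (⊤ : ℕ∞) a x := ha.contDiffAt (hU.mem_nhds hx)
  have hux : ContDiffAt ℝ (⊤ : ℕ∞) u x := hu.contDiffAt (hU.mem_nhds hx)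
  have hda : HasFDerivAt a (fderiv ℝ a x) x := (hax.differentiableAt (by simp)).hasFDerivAt
  have hdp : ∀ i, HasFDerivAt (pd i u) (fderiv ℝ (pd i u) x) x := fun i =>
    (pd_pd_aux u x hux i).differentiableAt.hasFDerivAt
  have hRd : ∀ m, pd m R x = pd m a x * (∑ i, x i * pd i u x)
      + a x * (pd m u x + ∑ i, x i * pd i (pd m u) x) := by
    intro m
    have e : R = fun y => a y * ∑ i, y i * pd i u y := funext hR
    have h := hda.mul (HasFDerivAt.fun_sum (u := Finset.univ)
      (fun i _ => (coord_aux x i).mul (hdp i)))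
    have h' := h.congr_of_eventuallyEq (f₁ := R) (Filter.Eventually.of_forall (fun y => by
      simp [e]))
    rw [pd, h'.fderiv]
    have hs : ∀ i, pd i (pd m u) x = fderiv ℝ (pd i u) x (EuclideanSpace.single m 1) :=
      fun i => pd_symm_aux u x hux i m
    simp only [hs]
    simp [Finset.sum_add_distrib, Pi.single_apply]
    simp only [pd]
    ring
  have hTd : ∀ i, pd i (T j k) x = -((if i = k then 1 else 0) * pd j u x)
      - x k * pd i (pd j u) x + (if i = j then 1 else 0) * pd k u x
      + x j * pd i (pd k u) x := by
    intro i
    have e : T j k = fun y => -(y k) * pd j u y + y j * pd k u y := funext (hT j k)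
    have h := ((coord_aux x k).neg.mul (hdp j)).add ((coord_aux x j).mul (hdp k))
    have h' := h.congr_of_eventuallyEq (f₁ := T j k) (Filter.Eventually.of_forall (fun y => by
      simp [e]))
    rw [pd, h'.fderiv]
    simp [Pi.single_apply, eq_comm]
    simp only [pd]
    split_ifs <;> ring
  rw [hRd, hRd]
  have key : ∑ i, pd i a x * pd i (T j k) x = -(pd k a x) * pd j u x + pd j a x * pd k u x
      - pd k a x * (∑ i, x i * pd i (pd j u) x) + pd j a x * (∑ i, x i * pd i (pd k u) x) := by
    have : ∀ i, pd i a x * pd i (T j k) x =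
        -((if i = k then pd i a x else 0) * pd j u x) + (if i = j then pd i a x else 0) * pd k u x
        - pd k a x * (x i * pd i (pd j u) x) + pd j a x * (x i * pd i (pd k u) x) := by
      intro i
      rw [hTd]
      have h1 := hrad i k x hx
      have h2 := hrad i j x hx
      split_ifs <;> linear_combination pd i (pd j u) x * h1 - pd i (pd k u) x * h2
    rw [Finset.sum_congr rfl (fun i _ => this i)]
    simp only [Finset.sum_add_distrib, Finset.sum_sub_distrib, Finset.sum_neg_distrib,
      ← Finset.sum_mul, ← Finset.mul_sum]
    simp
  rw [key]
  ring
end
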